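/- arXiv:1901.10929 — 10 statements merged into one kernel-verified Lean document; each statement's English description precedes it below -/
import Mathlib

section
/- Let r ≥ 1 and let v₁, …, v_k (k ≥ 2) be an r-modular sequence, with ε_i and a_i as defined. If j is an index such that the Euclidean norm of v_j is maximal among all v₁, …, v_k (i.e. ‖v_i‖ ≤ ‖v_j‖ for all i), then a_j ∈ {0, 1, −1}. -/
/-!
The vectors `p = ε_{j-1} v_{j-1}` and `q = ε_j v_{j+1}` have norm at most `‖v_j‖` and satisfy
`p + q = -a_j v_j`. By the parallelogram law,
`‖p - q‖² + a_j² ‖v_j‖² = 2 ‖p‖² + 2 ‖q‖² ≤ 4 ‖v_j‖²`. If `|a_j| ≥ 2`, this forces `p = q`, so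
`2 q = -a_j v_j` and `q` is parallel to `v_j`, contradicting `det(v_j, q) = r ≠ 0`.
-/

/-- det(u,v) = u₁v₂ − u₂v₁ for u, v ∈ ℤ². -/
def det2 (u v : ℤ × ℤ) : ℤ := u.1 * v.2 - u.2 * v.1

/-- A vector of ℤ² is primitive if the gcd of its two coordinates is 1. -/
def IsPrimitive (u : ℤ × ℤ) : Prop := Int.gcd u.1 u.2 = 1

/-- for an r-modular sequence v : ZMod k → ℤ² (k ≥ 2), with
ε_i ∈ {1,−1} defined by det(v_i, v_{i+1}) = ε_i·r and a_i the (unique) integer with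
ε_{i−1}·v_{i−1} + ε_i·v_{i+1} + a_i·v_i = 0, if v_j has maximal Euclidean norm
(equivalently, maximal sum of squares of coordinates) then a_j ∈ {0, 1, −1}. -/
theorem a_of_max_norm_mem (r : ℤ) (hr : 1 ≤ r) (k : ℕ) [NeZero k] (hk : 2 ≤ k)
    (v : ZMod k → ℤ × ℤ)
    (hprim : ∀ i, IsPrimitive (v i))
    (ε : ZMod k → ℤ) (hε : ∀ i, ε i = 1 ∨ ε i = -1)
    (hdet : ∀ i, det2 (v i) (v (i + 1)) = ε i * r)
    (a : ZMod k → ℤ)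
    (ha : ∀ i, ε (i - 1) • v (i - 1) + ε i • v (i + 1) + a i • v i = 0)
    (j : ZMod k)
    (hj : ∀ i, (v i).1 ^ 2 + (v i).2 ^ 2 ≤ (v j).1 ^ 2 + (v j).2 ^ 2) :
    a j = 0 ∨ a j = 1 ∨ a j = -1 := by
  have h := ha j
  have h1 := congrArg Prod.fst h
  have h2 := congrArg Prod.snd h
  have hd := hdet j
  have hp := hj (j - 1)
  have hq := hj (j + 1)
  have he := hε j
  have hf := hε (j - 1)
  simp only [Prod.fst_add, Prod.snd_add, Prod.smul_fst, Prod.smul_snd, Prod.fst_zero,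
    Prod.snd_zero, smul_eq_mul, det2] at h1 h2 hd
  generalize (v (j - 1)).1 = p₁ at *
  generalize (v (j - 1)).2 = p₂ at *
  generalize (v (j + 1)).1 = q₁ at *
  generalize (v (j + 1)).2 = q₂ at *
  generalize (v j).1 = w₁ at *
  generalize (v j).2 = w₂ at *
  generalize ε (j - 1) = f at *
  generalize ε j = e at *
  generalize a j = c at *
  have he2 : e ^ 2 = 1 := by rcases he with rfl | rfl <;> norm_num
  have hf2 : f ^ 2 = 1 := by rcases hf with rfl | rfl <;> norm_num
  by_contra hc
  have hc4 : 4 ≤ c ^ 2 := by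
    have : c ≤ -2 ∨ 2 ≤ c := by omega
    rcases this with h | h <;> nlinarith
  -- The parallelogram law for `f • v (j - 1)` and `e • v (j + 1)`, whose sum is `-c • v j`.
  have hpar : (f * p₁ - e * q₁) ^ 2 + (f * p₂ - e * q₂) ^ 2 + c ^ 2 * (w₁ ^ 2 + w₂ ^ 2)
      = 2 * (p₁ ^ 2 + p₂ ^ 2) + 2 * (q₁ ^ 2 + q₂ ^ 2) := by
    linear_combination (2 * (p₁ ^ 2 + p₂ ^ 2)) * hf2 + (2 * (q₁ ^ 2 + q₂ ^ 2)) * he2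
      - (f * p₁ + e * q₁ - c * w₁) * h1 - (f * p₂ + e * q₂ - c * w₂) * h2
  have hN : 4 * (w₁ ^ 2 + w₂ ^ 2) ≤ c ^ 2 * (w₁ ^ 2 + w₂ ^ 2) :=
    mul_le_mul_of_nonneg_right hc4 (by positivity)
  have hz1 : f * p₁ - e * q₁ = 0 := by
    apply pow_eq_zero_iff two_ne_zero |>.mp
    nlinarith [sq_nonneg (f * p₁ - e * q₁), sq_nonneg (f * p₂ - e * q₂)]
  have hz2 : f * p₂ - e * q₂ = 0 := by
    apply pow_eq_zero_iff two_ne_zero |>.mp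
    nlinarith [sq_nonneg (f * p₁ - e * q₁), sq_nonneg (f * p₂ - e * q₂)]
  -- Hence `2 e • v (j + 1) = -c • v j`, so the determinant of `v j`, `v (j + 1)` vanishes.
  have hr0 : 2 * r = 0 := by
    linear_combination (-2 * r) * he2 - 2 * e * hd + w₁ * (h2 - hz2) - w₂ * (h1 - hz1)
  omega
end

section
/- Let r ≥ 1 and let v₁, …, v_k (k ≥ 2) be an r-modular sequence, with ε_i and a_i as defined. Identify each v_i = (x_i, y_i) with the complex number z_i = x_i + y_i·√(−1), and set z_{k+1} = z₁. Then Σ_{i=1}^{k} arg(z_{i+1}/z_i) = (π/6)·( Σ_{i=1}^{k} a_i + 3·Σ_{i=1}^{k} ε_i ), where arg denotes the principal argument with values in (−π, π]. (Since det(v_i, v_{i+1}) = ±r ≠ 0, no quotient z_{i+1}/z_i is real, and the left-hand side equals 2π times the winding number around the origin of the closed polygonal loop v₁ → v₂ → ⋯ → v_k → v₁; thus the winding number of the sequence is (1/12)(Σ a_i + 3 Σ ε_i).) -/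
open ModularForm in
/-- The explicit logarithm `2πiz/24 + ∑ log (1 - q ^ (n + 1))`, `q = exp (2πiz)`, of the Dedekind
eta function; meaningful for `z` in the upper half-plane. -/
noncomputable def logEta (z : ℂ) : ℂ :=
  2 * Real.pi * Complex.I * z / 24 + ∑' n : ℕ, Complex.log (1 - eta_q n z)

open ModularForm in
lemma logEta_add_int (z : ℂ) (m : ℤ) :
    logEta (z + m) = logEta z + 2 * Real.pi * Complex.I * m / 24 := by
  have h : ∀ n : ℕ, eta_q n (z + m) = eta_q n z := by
    intro n
    rw [eta_q_eq_pow, eta_q_eq_pow]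
    congr 1
    rw [mul_add, mul_comm (2 * (Real.pi : ℂ) * Complex.I) (m : ℂ)]
    exact Complex.exp_periodic.int_mul m _
  simp only [logEta, h]
  ring

open ModularForm UpperHalfPlane in
lemma exp_logEta {z : ℂ} (hz : z ∈ upperHalfPlaneSet) : Complex.exp (logEta z) = eta z := by
  have hs : Summable fun n : ℕ => Complex.log (1 - eta_q n z) := by
    simpa [sub_eq_add_neg] using
      Complex.summable_log_one_add_of_summable (summable_eta_q ⟨z, hz⟩).of_norm
  rw [logEta, Complex.exp_add,
    Complex.cexp_tsum_eq_tprod (fun n => one_sub_eta_q_ne_zero n hz) hs, eta]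
  congr 1

/-- The sum `∑ log (1 - q ^ (n + 1))` converges uniformly on every disc `‖q‖ < ρ` with `ρ < 1`,
where the general term is at most `ρ ^ (n + 1) / (1 - ρ)`. -/
lemma continuousOn_tsum_log_one_sub_pow {ρ : ℝ} (h0 : 0 ≤ ρ) (h1 : ρ < 1) :
    ContinuousOn (fun q : ℂ => ∑' n : ℕ, Complex.log (1 - q ^ (n + 1))) (Metric.ball 0 ρ) := by
  have hpow : ∀ (n : ℕ), ∀ q ∈ Metric.ball (0 : ℂ) ρ, ‖-q ^ (n + 1)‖ ≤ ρ ^ (n + 1) := by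
    intro n q hq
    rw [norm_neg, norm_pow]
    exact pow_le_pow_left₀ (norm_nonneg _) (mem_ball_zero_iff.mp hq).le _
  have hle : ∀ n : ℕ, ρ ^ (n + 1) ≤ ρ := fun n =>
    pow_le_of_le_one h0 h1.le (Nat.succ_ne_zero n)
  refine continuousOn_tsum (u := fun n : ℕ => ρ ^ (n + 1) * (1 - ρ)⁻¹) ?_ ?_ ?_
  · intro n q hq
    have hlt : ‖-q ^ (n + 1)‖ < 1 := ((hpow n q hq).trans (hle n)).trans_lt h1
    have hmem := Complex.mem_slitPlane_of_norm_lt_one hlt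
    rw [← sub_eq_add_neg] at hmem
    exact ContinuousAt.continuousWithinAt (ContinuousAt.clog (by fun_prop) hmem)
  · exact ((summable_nat_add_iff 1).mpr (summable_geometric_of_lt_one h0 h1)).mul_right _
  · intro n q hq
    have hb := (hpow n q hq).trans (hle n)
    have h := Complex.norm_log_sub_logTaylor_le 0 (hb.trans_lt h1)
    simp only [Complex.logTaylor_succ, Complex.logTaylor_zero, zero_add, pow_one,
      div_zero, sub_zero, div_one, Pi.add_apply, CharP.cast_eq_zero] at h
    rw [← sub_eq_add_neg] at h
    refine h.trans ?_
    have := hpow n q hq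
    have h2 : 0 < 1 - ρ := by linarith
    have h3 : 0 < 1 - ‖-q ^ (n + 1)‖ := by linarith
    gcongr

open ModularForm UpperHalfPlane in
lemma continuousOn_logEta : ContinuousOn logEta upperHalfPlaneSet := by
  intro z hz
  have hq : ‖Function.Periodic.qParam 1 z‖ < 1 := by
    simpa using norm_qParam_lt_one 1 ⟨z, hz⟩
  obtain ⟨ρ, hρ, hρ1⟩ := exists_between hq
  have hc := (continuousOn_tsum_log_one_sub_pow ((norm_nonneg _).trans hρ.le) hρ1).continuousAt
    (Metric.isOpen_ball.mem_nhds (mem_ball_zero_iff.mpr hρ))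
  have hcomp : ContinuousAt (fun w : ℂ => ∑' n : ℕ, Complex.log (1 - eta_q n w)) z :=
    ContinuousAt.comp (f := Function.Periodic.qParam 1) hc (by fun_prop)
  unfold logEta
  exact (ContinuousAt.add (by fun_prop) hcomp).continuousWithinAt

lemma neg_inv_im_pos {z : ℂ} (hz : 0 < z.im) : 0 < (-1 / z).im := by
  have hz0 : z ≠ 0 := by
    rintro rfl
    simp at hz
  simp only [neg_div, one_div, Complex.neg_im, Complex.inv_im, neg_neg]
  exact div_pos hz (Complex.normSq_pos.mpr hz0)

open ModularForm UpperHalfPlane in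
lemma logEta_neg_inv {z : ℂ} (hz : 0 < z.im) :
    logEta (-1 / z) = logEta z + Complex.log z / 2 - Real.pi * Complex.I / 4 := by
  have hne : ∀ w ∈ upperHalfPlaneSet, w ≠ 0 := by
    rintro w hw rfl
    simp [upperHalfPlaneSet] at hw
  have hexp : ∀ w ∈ upperHalfPlaneSet,
      Complex.exp (logEta (-1 / w) - logEta w - Complex.log w / 2)
        = Complex.exp (-(Real.pi * Complex.I / 4)) := by
    intro w hw
    have h := eta_comp_eq_csqrt_I_inv hw
    simp only [Function.comp_apply, Pi.smul_apply, Pi.mul_apply, smul_eq_mul] at h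
    have hs : Complex.sqrt w ≠ 0 := by
      rw [sqrt_eq_exp (hne w hw)]; exact Complex.exp_ne_zero _
    rw [Complex.exp_sub, Complex.exp_sub, exp_logEta (neg_inv_im_pos hw), exp_logEta hw,
      ← sqrt_eq_exp (hne w hw), h, sqrt_eq_exp Complex.I_ne_zero, Complex.log_I,
      Complex.exp_neg]
    have he := eta_ne_zero hw
    field_simp
    norm_num
  have hcont : ContinuousOn (fun w : ℂ => logEta (-1 / w) - logEta w - Complex.log w / 2)
      upperHalfPlaneSet := by
    refine ((continuousOn_logEta.comp ?_ fun w hw => neg_inv_im_pos hw).sub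
      continuousOn_logEta).sub (ContinuousOn.div_const ?_ _)
    · exact ContinuousOn.div (by fun_prop) (by fun_prop) hne
    · exact fun w hw => (continuousAt_clog
        (Complex.mem_slitPlane_iff.mpr (Or.inr (ne_of_gt hw)))).continuousWithinAt
  have hconst := Complex.isCoveringMap_exp.constOn_of_comp
    (convex_halfSpace_im_gt 0).isPreconnected hcont
    (fun w hw w' hw' => Subtype.ext ((hexp w hw).trans (hexp w' hw').symm))
    (show z ∈ upperHalfPlaneSet from hz) (show Complex.I ∈ upperHalfPlaneSet by simp)
  have hI : (-1 : ℂ) / Complex.I = Complex.I := by simp [neg_div]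
  simp only [hI, Complex.log_I] at hconst
  linear_combination hconst

/-- for an r-modular sequence v : ZMod k → ℤ² (k ≥ 2), with ε_i and a_i
as usual, identifying v_i = (x_i, y_i) with z_i = x_i + y_i·i ∈ ℂ, the total turning
angle Σ arg(z_{i+1}/z_i) (which is 2π times the winding number of the loop about the
origin) equals (π/6)·(Σ a_i + 3·Σ ε_i). -/
theorem winding_number_of_r_modular_sequence (r : ℤ) (hr : 1 ≤ r)
    (k : ℕ) [NeZero k] (hk : 2 ≤ k)
    (v : ZMod k → ℤ × ℤ)
    (hprim : ∀ i, IsPrimitive (v i))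
    (ε : ZMod k → ℤ) (hε : ∀ i, ε i = 1 ∨ ε i = -1)
    (hdet : ∀ i, det2 (v i) (v (i + 1)) = ε i * r)
    (a : ZMod k → ℤ)
    (ha : ∀ i, ε (i - 1) • v (i - 1) + ε i • v (i + 1) + a i • v i = 0)
    (z : ZMod k → ℂ)
    (hz : ∀ i, z i = ((v i).1 : ℂ) + ((v i).2 : ℂ) * Complex.I) :
    ∑ i : ZMod k, (z (i + 1) / z i).arg =
      Real.pi / 6 * (((∑ i : ZMod k, a i) + 3 * ∑ i : ZMod k, ε i : ℤ) : ℝ) := by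
  have hre : ∀ i, (z i).re = (v i).1 := fun i => by simp [hz]
  have him : ∀ i, (z i).im = (v i).2 := fun i => by simp [hz]
  have hε2 : ∀ i, (ε i : ℝ) * ε i = 1 := fun i => by rcases hε i with h | h <;> simp [h]
  have hε2' : ∀ i, (ε i : ℂ) * ε i = 1 := fun i => by rcases hε i with h | h <;> simp [h]
  have hr0 : (0 : ℝ) < r := by exact_mod_cast hr
  have hdetR : ∀ i, ((v i).1 : ℝ) * (v (i + 1)).2 - (v i).2 * (v (i + 1)).1 = ε i * r := by
    intro i
    have := hdet i
    unfold det2 at this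
    exact_mod_cast this
  have hz0 : ∀ i, z i ≠ 0 := by
    intro i h
    have h1 := hdetR i
    rw [← hre i, ← him i, h] at h1
    rcases hε i with he | he <;> simp [he] at h1 <;> linarith
  set τ : ZMod k → ℂ := fun i => ε i * (z (i + 1) / z i) with hτ
  have hτim : ∀ i, 0 < (τ i).im := by
    intro i
    have hn := Complex.normSq_pos.mpr (hz0 i)
    have : (τ i).im = r / Complex.normSq (z i) := by
      have h1 : (τ i).im = ε i * (z (i + 1) / z i).im := by
        rw [hτ]
        simp
      rw [h1, Complex.div_im, hre, him, hre, him]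
      field_simp
      linear_combination (ε i : ℝ) * hdetR i + r * hε2 i
    rw [this]
    positivity
  have hrec : ∀ i, (ε i : ℂ) * z i + ε (i + 1) * z (i + 1 + 1) + a (i + 1) * z (i + 1) = 0 := by
    intro i
    have h := ha (i + 1)
    rw [add_sub_cancel_right] at h
    have h1 := congrArg Prod.fst h
    have h2 := congrArg Prod.snd h
    simp only [Prod.fst_add, Prod.snd_add, Prod.smul_fst, Prod.smul_snd, smul_eq_mul,
      Prod.fst_zero, Prod.snd_zero] at h1 h2
    have h1' := congrArg (Int.cast : ℤ → ℂ) h1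
    have h2' := congrArg (Int.cast : ℤ → ℂ) h2
    push_cast at h1' h2'
    rw [hz, hz, hz]
    linear_combination h1' + Complex.I * h2'
  have hstep : ∀ i, τ (i + 1) = -1 / τ i + ((-a (i + 1) : ℤ) : ℂ) := by
    intro i
    have e0 : (ε i : ℂ) ≠ 0 := left_ne_zero_of_mul_eq_one (hε2' i)
    have z0 := hz0 i
    have z1 := hz0 (i + 1)
    simp only [hτ]
    push_cast
    field_simp
    linear_combination (ε i : ℂ) * hrec i - z i * hε2' i
  have hlog : ∀ i, logEta (τ (i + 1)) = logEta (τ i) + Complex.log (τ i) / 2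
      - Real.pi * Complex.I / 4 - 2 * Real.pi * Complex.I * a (i + 1) / 24 := by
    intro i
    rw [hstep, logEta_add_int, logEta_neg_inv (hτim i)]
    push_cast
    ring
  have harg : ∀ i, (z (i + 1) / z i).arg = (τ i).arg + Real.pi / 2 * (ε i - 1) := by
    intro i
    have hp := hτim i
    rcases hε i with he | he
    · simp [hτ, he]
    · have hw : z (i + 1) / z i = -τ i := by simp [hτ, he]
      rw [hw, Complex.arg_neg_eq_arg_sub_pi_of_im_pos hp, he]
      push_cast
      ring
  have hargτ : ∀ i, (τ i).arg = 2 * ((logEta (τ (i + 1))).im - (logEta (τ i)).im)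
      + Real.pi / 2 + Real.pi / 6 * a (i + 1) := by
    intro i
    have h := congrArg Complex.im (hlog i)
    have e1 : (Complex.log (τ i) / 2).im = (τ i).arg / 2 := by
      simp [Complex.log_im]
    have e2 : ((Real.pi : ℂ) * Complex.I / 4).im = Real.pi / 4 := by simp
    have e3 : (2 * (Real.pi : ℂ) * Complex.I * a (i + 1) / 24).im
        = 2 * Real.pi * a (i + 1) / 24 := by simp
    rw [Complex.sub_im, Complex.sub_im, Complex.add_im, e1, e2, e3] at h
    linarith
  have hshift : ∀ f : ZMod k → ℝ, ∑ i, f (i + 1) = ∑ i, f i := fun f =>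
    Equiv.sum_comp (Equiv.addRight (1 : ZMod k)) f
  have hterm : ∀ i, (z (i + 1) / z i).arg = 2 * ((logEta (τ (i + 1))).im - (logEta (τ i)).im)
      + Real.pi / 6 * a (i + 1) + Real.pi / 2 * ε i := by
    intro i
    rw [harg, hargτ]
    ring
  simp_rw [hterm]
  rw [Finset.sum_add_distrib, Finset.sum_add_distrib, ← Finset.mul_sum, ← Finset.mul_sum,
    ← Finset.mul_sum, Finset.sum_sub_distrib, hshift fun i => (logEta (τ i)).im,
    hshift fun i => (a i : ℝ)]
  push_cast
  ring
end

section
/- Let r ≥ 1 and let v₁, …, v_k (k ≥ 2) be an r-modular sequence, with ε_i and a_i as defined. For each i define w_i = (v_i − v_{i−1}) / det(v_{i−1}, v_i) ∈ ℚ² (where v₀ = v_k). Then for every i (indices modulo k), det(w_i, w_{i+1}) = (a_i + ε_i + ε_{i−1}) / r. -/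
/-- det(u,v) = u₁v₂ − u₂v₁ for u, v ∈ ℚ². -/
def det2Q (u v : ℚ × ℚ) : ℚ := u.1 * v.2 - u.2 * v.1

/-- The inclusion ℤ² → ℚ². -/
def ratify (u : ℤ × ℤ) : ℚ × ℚ := ((u.1 : ℚ), (u.2 : ℚ))

/-- for an r-modular sequence v : ZMod k → ℤ² (k ≥ 2), with ε_i and a_i
as usual, setting w_i = (v_i − v_{i−1}) / det(v_{i−1}, v_i) ∈ ℚ², one has
det(w_i, w_{i+1}) = (a_i + ε_i + ε_{i−1}) / r for every i. -/
theorem det_dual_of_r_modular_sequence (r : ℤ) (hr : 1 ≤ r)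
    (k : ℕ) [NeZero k] (hk : 2 ≤ k)
    (v : ZMod k → ℤ × ℤ)
    (hprim : ∀ i, IsPrimitive (v i))
    (ε : ZMod k → ℤ) (hε : ∀ i, ε i = 1 ∨ ε i = -1)
    (hdet : ∀ i, det2 (v i) (v (i + 1)) = ε i * r)
    (a : ZMod k → ℤ)
    (ha : ∀ i, ε (i - 1) • v (i - 1) + ε i • v (i + 1) + a i • v i = 0)
    (w : ZMod k → ℚ × ℚ)
    (hw : ∀ i, w i = ((det2 (v (i - 1)) (v i) : ℤ) : ℚ)⁻¹ • (ratify (v i) - ratify (v (i - 1)))) :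
    ∀ i : ZMod k, det2Q (w i) (w (i + 1)) = ((a i + ε i + ε (i - 1) : ℤ) : ℚ) / (r : ℚ) := by
  intro i
  have h1 := hdet (i - 1)
  have h2 := hdet i
  have h3 := ha i
  have hw1 := hw i
  have hw2 := hw (i + 1)
  rw [sub_add_cancel] at h1
  rw [add_sub_cancel_right] at hw2
  rw [h1] at hw1
  rw [h2] at hw2
  have hr0 : (r : ℚ) ≠ 0 := by
    have : r ≠ 0 := by omega
    exact_mod_cast this
  have hx := congrArg Prod.fst h3
  have hy := congrArg Prod.snd h3
  simp only [Prod.fst_add, Prod.snd_add, Prod.smul_fst, Prod.smul_snd, smul_eq_mul,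
    Prod.fst_zero, Prod.snd_zero] at hx hy
  simp only [det2] at h1 h2
  rw [hw1, hw2]
  simp only [det2Q, ratify, Prod.smul_fst, Prod.smul_snd, Prod.fst_sub, Prod.snd_sub, smul_eq_mul]
  generalize v (i - 1) = p at *
  generalize v (i + 1) = s at *
  generalize v i = q at *
  have h1q : (p.1 * q.2 - p.2 * q.1 : ℚ) = ε (i - 1) * r := by exact_mod_cast h1
  have h2q : (q.1 * s.2 - q.2 * s.1 : ℚ) = ε i * r := by exact_mod_cast h2
  have hxq : (ε (i - 1) * p.1 + ε i * s.1 + a i * q.1 : ℚ) = 0 := by exact_mod_cast hx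
  have hyq : (ε (i - 1) * p.2 + ε i * s.2 + a i * q.2 : ℚ) = 0 := by exact_mod_cast hy
  have he : (ε (i - 1) : ℚ) * ε (i - 1) = 1 := by
    rcases hε (i - 1) with h | h <;> rw [h] <;> norm_num
  have hf : (ε i : ℚ) * ε i = 1 := by
    rcases hε i with h | h <;> rw [h] <;> norm_num
  push_cast
  generalize (ε (i - 1) : ℚ) = e at *
  generalize (ε i : ℚ) = f at *
  -- Pairing the relation at `i` with `v (i - 1)` on the left evaluates `det (v (i - 1), v (i + 1))`.
  have h3q : (p.1 * s.2 - p.2 * s.1 : ℚ) = - (a i * e * f * r) := by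
    linear_combination f * p.1 * hyq - f * p.2 * hxq - f * a i * h1q
      - (p.1 * s.2 - p.2 * s.1) * hf
  -- The signs `e` and `f` are their own inverses.
  have hei : (e * r)⁻¹ = e / r := by
    rw [mul_inv, inv_eq_of_mul_eq_one_right he, div_eq_mul_inv]
  have hfi : (f * r)⁻¹ = f / r := by
    rw [mul_inv, inv_eq_of_mul_eq_one_right hf, div_eq_mul_inv]
  have key : ((q.1 - p.1) * (s.2 - q.2) - (q.2 - p.2) * (s.1 - q.1) : ℚ)
      = (f + e + a i * e * f) * r := by
    linear_combination h2q + h1q - h3q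
  rw [hei, hfi]
  calc _ = e * f * ((q.1 - p.1) * (s.2 - q.2) - (q.2 - p.2) * (s.1 - q.1) : ℚ) / (r * r) := by
        ring
    _ = e * f * (f + e + a i * e * f) / r := by
        rw [key]; field_simp
    _ = _ := by
        congr 1
        linear_combination (f + a i * f * f) * he + (e + a i) * hf
end

section
/- Let r ≥ 1 and let P = (v₁, …, v_k) (k ≥ 2) be an r-modular sequence, with ε_i and a_i as defined. For each i define w_i = (v_i − v_{i−1}) / det(v_{i−1}, v_i) ∈ ℚ² (where v₀ = v_k), set B(P) = Σ_{i=1}^{k} det(v_i, v_{i+1}) and B(P^∨) = Σ_{i=1}^{k} det(w_i, w_{i+1}). Then (1/r)·B(P) + r·B(P^∨) = Σ_{i=1}^{k} a_i + 3·Σ_{i=1}^{k} ε_i. -/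
/-- The local form of the identity, for three consecutive vectors `p, q, s` of the sequence. -/
theorem mul_det2Q_dual {r e f a : ℤ} (hr : r ≠ 0) (he : e = 1 ∨ e = -1) (hf : f = 1 ∨ f = -1)
    {p q s : ℤ × ℤ} (hpq : det2 p q = e * r) (hqs : det2 q s = f * r)
    (hrel : e • p + f • s + a • q = 0) :
    (r : ℚ) * det2Q (((det2 p q : ℤ) : ℚ)⁻¹ • (ratify q - ratify p))
        (((det2 q s : ℤ) : ℚ)⁻¹ • (ratify s - ratify q)) = a + e + f := by
  have h1 : e * p.1 + f * s.1 + a * q.1 = 0 := by simpa using congrArg Prod.fst hrel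
  have h2 : e * p.2 + f * s.2 + a * q.2 = 0 := by simpa using congrArg Prod.snd hrel
  have hps : f * det2 p s = -(a * (e * r)) := by
    rw [← hpq]
    simp only [det2]
    linear_combination p.1 * h2 - p.2 * h1
  have hr' : (r : ℚ) ≠ 0 := by exact_mod_cast hr
  have hpqQ : (p.1 * q.2 - p.2 * q.1 : ℚ) = e * r := by exact_mod_cast hpq
  have hqsQ : (q.1 * s.2 - q.2 * s.1 : ℚ) = f * r := by exact_mod_cast hqs
  have hpsQ : (f * (p.1 * s.2 - p.2 * s.1) : ℚ) = -(a * (e * r)) := by exact_mod_cast hps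
  rw [hpq, hqs]
  simp only [det2Q, ratify, Prod.smul_fst, Prod.smul_snd, Prod.fst_sub, Prod.snd_sub, smul_eq_mul]
  rcases he with rfl | rfl <;> rcases hf with rfl | rfl <;> push_cast at * <;> field_simp <;>
    linarith

/-- for an r-modular sequence P = (v₁,…,v_k) (k ≥ 2), with ε_i and a_i
as usual, w_i = (v_i − v_{i−1}) / det(v_{i−1}, v_i), B(P) = Σ det(v_i, v_{i+1}) and
B(P^∨) = Σ det(w_i, w_{i+1}), we have (1/r)·B(P) + r·B(P^∨) = Σ a_i + 3·Σ ε_i. -/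
theorem B_add_B_dual_of_r_modular_sequence (r : ℤ) (hr : 1 ≤ r)
    (k : ℕ) [NeZero k] (hk : 2 ≤ k)
    (v : ZMod k → ℤ × ℤ)
    (hprim : ∀ i, IsPrimitive (v i))
    (ε : ZMod k → ℤ) (hε : ∀ i, ε i = 1 ∨ ε i = -1)
    (hdet : ∀ i, det2 (v i) (v (i + 1)) = ε i * r)
    (a : ZMod k → ℤ)
    (ha : ∀ i, ε (i - 1) • v (i - 1) + ε i • v (i + 1) + a i • v i = 0)
    (w : ZMod k → ℚ × ℚ)
    (hw : ∀ i, w i = ((det2 (v (i - 1)) (v i) : ℤ) : ℚ)⁻¹ • (ratify (v i) - ratify (v (i - 1)))) :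
    (1 / (r : ℚ)) * ((∑ i : ZMod k, det2 (v i) (v (i + 1)) : ℤ) : ℚ)
        + (r : ℚ) * ∑ i : ZMod k, det2Q (w i) (w (i + 1))
      = (((∑ i : ZMod k, a i) + 3 * ∑ i : ZMod k, ε i : ℤ) : ℚ) := by
  have hr0 : r ≠ 0 := by omega
  have hrQ : (r : ℚ) ≠ 0 := by exact_mod_cast hr0
  have hlocal : ∀ i, (r : ℚ) * det2Q (w i) (w (i + 1)) = a i + ε (i - 1) + ε i := by
    intro i
    have hpq : det2 (v (i - 1)) (v i) = ε (i - 1) * r := by simpa using hdet (i - 1)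
    rw [hw i, hw (i + 1), add_sub_cancel_right]
    exact mul_det2Q_dual hr0 (hε _) (hε _) hpq (hdet i) (ha i)
  have hshift : ∑ i : ZMod k, (ε (i - 1) : ℚ) = ∑ i : ZMod k, (ε i : ℚ) :=
    (Equiv.subRight (1 : ZMod k)).sum_comp fun i => (ε i : ℚ)
  rw [Finset.mul_sum, Finset.sum_congr rfl fun i _ => hlocal i,
    Finset.sum_congr rfl fun i _ => hdet i, ← Finset.sum_mul]
  push_cast
  rw [Finset.sum_add_distrib, Finset.sum_add_distrib, hshift]
  field_simp
  ring
end

section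
/- (Generalised twelve-point theorem.) Let r ≥ 1 and let P = (v₁, …, v_k) (k ≥ 2) be an r-modular sequence. For each i define w_i = (v_i − v_{i−1}) / det(v_{i−1}, v_i) ∈ ℚ² (where v₀ = v_k), set B(P) = Σ_{i=1}^{k} det(v_i, v_{i+1}) and B(P^∨) = Σ_{i=1}^{k} det(w_i, w_{i+1}). Identify each v_i = (x_i, y_i) with the complex number z_i = x_i + y_i·√(−1), and set z_{k+1} = z₁. Then (1/r)·B(P) + r·B(P^∨) = (6/π)·Σ_{i=1}^{k} arg(z_{i+1}/z_i), where arg denotes the principal argument in (−π, π]; that is, (1/r)·B(P) + r·B(P^∨) equals 12 times the winding number of P around the origin. -/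
section Discriminant

open Complex hiding eta
open ModularForm
open UpperHalfPlane hiding I

/-- A continuous logarithm of the constant `1` on a connected set is constant: it takes values in the
discrete set `2πiℤ`. -/
theorem constant_log {S : Set ℂ} (hS : IsPreconnected S) {h : ℂ → ℂ} (hc : ContinuousOn h S)
    (h1 : ∀ z ∈ S, exp (h z) = 1) {x y : ℂ} (hx : x ∈ S) (hy : y ∈ S) : h x = h y := by
  have key : (h x / (2 * Real.pi * I)).re = (h y / (2 * Real.pi * I)).re := by
    refine hS.constant_of_mapsTo (T := Set.range ((↑) : ℤ → ℝ))
      Real.isClosedEmbedding_intCast.isDiscrete_range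
      (f := fun z => (h z / (2 * Real.pi * I)).re) ?_ ?_ hx hy
    · exact Complex.continuous_re.comp_continuousOn (hc.div_const _)
    · intro z hz
      obtain ⟨n, hn⟩ := exp_eq_one_iff.1 (h1 z hz)
      refine ⟨n, ?_⟩
      simp only [hn, mul_div_cancel_right₀ _ two_pi_I_ne_zero, intCast_re]
  obtain ⟨n, hn⟩ := exp_eq_one_iff.1 (h1 x hx)
  obtain ⟨m, hm⟩ := exp_eq_one_iff.1 (h1 y hy)
  rw [hn, hm] at key ⊢
  simp only [mul_div_cancel_right₀ _ two_pi_I_ne_zero, intCast_re, Int.cast_inj] at key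
  rw [key]

/-- The Euler product `∏ (1 - qⁿ)` has a continuous logarithm on the open unit disc, which is simply
connected. Taking the logarithm in the variable `q` makes it automatically periodic in `z`. -/
theorem exists_log_eulerProduct : ∃ g : ℂ → ℂ, ContinuousOn g (Metric.ball 0 1) ∧
    ∀ q ∈ Metric.ball (0 : ℂ) 1, exp (g q) = ∏' n : ℕ, (1 - q ^ (n + 1)) := by
  have hsc : IsSimplyConnected (Metric.ball (0 : ℂ) 1) := by
    have : ContractibleSpace (Metric.ball (0 : ℂ) 1) :=
      (convex_ball (0 : ℂ) 1).contractibleSpace ⟨0, by simp⟩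
    exact SimplyConnectedSpace.ofContractible _
  obtain ⟨g, hg, he⟩ := exists_continuousOn_eqOn_exp_comp hsc Metric.isOpen_ball
    differentiableOn_tprod_one_sub_pow.continuousOn (by
      rintro ⟨q, hq, h0⟩
      have hq' : ‖q‖ < 1 := by simpa using hq
      refine tprod_one_add_ne_zero_of_summable (f := fun n : ℕ => -q ^ (n + 1)) ?_ ?_
        (by simpa [sub_eq_add_neg] using h0)
      · intro n hn
        have : ‖q ^ (n + 1)‖ < 1 := by
          rw [norm_pow]; exact pow_lt_one₀ (norm_nonneg _) hq' (by simp)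
        rw [← sub_eq_add_neg, sub_eq_zero] at hn
        rw [← hn] at this
        simp at this
      · simpa using (summable_nat_add_iff 1).mpr
          (summable_geometric_of_lt_one (norm_nonneg _) hq'))
  exact ⟨g, hg, he⟩

/-- A continuous branch of `log η` on the upper half plane, namely `2πiz/24 + log ∏ (1 - qⁿ)`. The
change under `z ↦ z + 1` is exact, not merely modulo `2πi`. -/
theorem exists_log_eta : ∃ L : ℂ → ℂ, ContinuousOn L upperHalfPlaneSet ∧
    (∀ z ∈ upperHalfPlaneSet, exp (L z) = eta z) ∧
    ∀ z, L (z + 1) = L z + Real.pi * I / 12 := by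
  obtain ⟨g, hg, he⟩ := exists_log_eulerProduct
  have hmaps : ∀ z ∈ upperHalfPlaneSet, Function.Periodic.qParam 1 z ∈ Metric.ball (0 : ℂ) 1 := by
    intro z hz
    simpa using norm_qParam_lt_one 1 ⟨z, hz⟩
  refine ⟨fun z => 2 * Real.pi * I * z / 24 + g (Function.Periodic.qParam 1 z), ?_, ?_, ?_⟩
  · refine ContinuousOn.add (by fun_prop) ?_
    exact hg.comp (by fun_prop) hmaps
  · intro z hz
    rw [exp_add, he _ (hmaps z hz), eta]
    simp [eta_q, Function.Periodic.qParam]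
  · intro z
    have : Function.Periodic.qParam 1 (z + 1) = Function.Periodic.qParam 1 z := by
      simp only [Function.Periodic.qParam, ofReal_one, div_one, mul_add, mul_one]
      exact exp_periodic _
    simp only [this]
    ring

/-- There is a branch `ψ` of the argument of the discriminant `Δ = η²⁴` on the upper half plane whose
behaviour under the generators `z ↦ z + 1` and `z ↦ -1/z` of the modular group is known exactly.
The constant in the second formula is determined at the fixed point `z = i`. -/
theorem exists_arg_discriminant : ∃ ψ : ℂ → ℝ, (∀ z, ψ (z + 1) = ψ z + 2 * Real.pi) ∧
    ∀ z : ℂ, 0 < z.im → ψ (-1 / z) = ψ z + 12 * (arg z - Real.pi / 2) := by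
  obtain ⟨L, hLc, hL, hT⟩ := exists_log_eta
  have hmaps : ∀ z ∈ upperHalfPlaneSet, -1 / z ∈ upperHalfPlaneSet := fun z hz => by
    have := (UpperHalfPlane.mk z hz).im_inv_neg_coe_pos
    simpa [neg_div, inv_neg] using this
  have hS : ∀ z ∈ upperHalfPlaneSet, L (-1 / z) = L z + (log z - log I) / 2 := by
    intro z hz
    have hIm : I ∈ upperHalfPlaneSet := by simp
    -- The difference of the two sides is a logarithm of `1`, and it vanishes at `i`.
    have := constant_log (S := upperHalfPlaneSet)
      (h := fun z => L (-1 / z) - L z - (log z - log I) / 2)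
      (convex_halfSpace_im_gt 0).isPreconnected ?_ ?_ hz hIm
    · have h2 : -1 / I = I := by simp
      simp only [h2, sub_self, zero_div] at this
      linear_combination this
    · refine ((hLc.comp ?_ hmaps).sub hLc).sub ?_
      · exact continuousOn_const.div continuousOn_id fun z hz => (UpperHalfPlane.mk z hz).ne_zero
      · refine ContinuousOn.div_const (ContinuousOn.sub ?_ continuousOn_const) _
        exact fun z hz => (continuousAt_clog (mem_slitPlane ⟨z, hz⟩)).continuousWithinAt
    · intro z hz
      have hz0 : z ≠ 0 := (UpperHalfPlane.mk z hz).ne_zero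
      have h3 := eta_comp_eq_csqrt_I_inv hz
      simp only [Function.comp_apply, Pi.smul_apply, Pi.mul_apply, smul_eq_mul,
        sqrt_eq_exp hz0, sqrt_eq_exp I_ne_zero] at h3
      rw [exp_sub, exp_sub, hL _ hz, hL _ (hmaps z hz), h3, sub_div, exp_sub]
      have := eta_ne_zero hz
      have h4 := exp_ne_zero (log z / 2)
      have h5 := exp_ne_zero (log I / 2)
      field_simp
  refine ⟨fun z => 24 * (L z).im, fun z => ?_, fun z hz => ?_⟩
  · have : (Real.pi * I / 12 : ℂ).im = Real.pi / 12 := by simp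
    simp only [hT, add_im, this]
    ring
  · have : ((log z - log I) / 2).im = (arg z - Real.pi / 2) / 2 := by
      simp [log_im]
    simp only [hS z hz, add_im, this]
    ring

end Discriminant

/-- Cramer's rule `det(a,c) b = det(b,c) a + det(a,b) c` shows that `r` divides `det(a,c) b`, and `b` is
primitive. -/
theorem dvd_det2_of_modular {r : ℤ} {a b c : ℤ × ℤ} (hb : IsPrimitive b)
    (h₁ : r ∣ det2 a b) (h₂ : r ∣ det2 b c) : r ∣ det2 a c := by
  have hx : r ∣ det2 a c * b.1 := by
    rw [show det2 a c * b.1 = det2 b c * a.1 + det2 a b * c.1 by unfold det2; ring]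
    exact dvd_add (h₂.mul_right _) (h₁.mul_right _)
  have hy : r ∣ det2 a c * b.2 := by
    rw [show det2 a c * b.2 = det2 b c * a.2 + det2 a b * c.2 by unfold det2; ring]
    exact dvd_add (h₂.mul_right _) (h₁.mul_right _)
  have hco : IsCoprime b.1 b.2 := Int.isCoprime_iff_gcd_eq_one.2 hb
  obtain ⟨s, t, hst⟩ := hco
  rw [show det2 a c = s * (det2 a c * b.1) + t * (det2 a c * b.2) by
    linear_combination (-det2 a c) * hst]
  exact dvd_add (hx.mul_left _) (hy.mul_left _)

theorem add_int_of_add_one {ψ : ℂ → ℝ} (hT : ∀ z, ψ (z + 1) = ψ z + 2 * Real.pi) (n : ℤ) (z : ℂ) :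
    ψ (z + n) = ψ z + 2 * Real.pi * n := by
  induction n using Int.induction_on with
  | zero => simp
  | succ n ih =>
    have := hT (z + n)
    push_cast at ih ⊢
    rw [← add_assoc, this, ih]; ring
  | pred n ih =>
    have := hT (z + (-n - 1))
    push_cast at ih ⊢
    rw [show z + (-n - 1) + 1 = z + -(n : ℂ) by ring, ih] at this
    linarith

/-- The complex number `x + iy` attached to an integer vector `(x, y)`. -/
noncomputable def toC (u : ℤ × ℤ) : ℂ := (u.1 : ℂ) + (u.2 : ℂ) * Complex.I

theorem toC_div_im (a b : ℤ × ℤ) :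
    (toC b / toC a).im = det2 a b / Complex.normSq (toC a) := by
  rw [Complex.div_im]
  simp [toC, det2]
  ring

theorem normSq_toC_pos {a b : ℤ × ℤ} (h : det2 a b ≠ 0) : 0 < Complex.normSq (toC a) := by
  rw [Complex.normSq_pos]
  intro h0
  have h1 := congrArg Complex.re h0
  have h2 := congrArg Complex.im h0
  simp [toC] at h1 h2
  simp [det2, h1, h2] at h

/-- If `det(a,b) = e r` with `e = ±1`, multiplying the quotient `b/a` by the sign `e` puts it in the
upper half plane. -/
theorem step_im_pos {r e : ℤ} (hr : 1 ≤ r) (he : e = 1 ∨ e = -1) {a b : ℤ × ℤ}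
    (h : det2 a b = e * r) : 0 < ((e : ℂ) * (toC b / toC a)).im := by
  have hr' : (0 : ℝ) < r := by exact_mod_cast hr
  have h0 : det2 a b ≠ 0 := by
    rw [h]; rcases he with rfl | rfl <;> simp <;> lia
  have hpos := normSq_toC_pos h0
  have him := toC_div_im a b
  rw [h] at him
  rcases he with rfl | rfl
  · simp only [Int.cast_one, one_mul] at him ⊢
    rw [him]; positivity
  · simp only [Int.cast_neg, Int.cast_one, neg_mul, one_mul, Complex.neg_im] at him ⊢
    rw [him, neg_div, neg_neg]; positivity

theorem step_arg {r e : ℤ} (hr : 1 ≤ r) (he : e = 1 ∨ e = -1) {a b : ℤ × ℤ}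
    (h : det2 a b = e * r) : ((e : ℂ) * (toC b / toC a)).arg - Real.pi / 2 =
      (toC b / toC a).arg - e * (Real.pi / 2) := by
  have hpos := step_im_pos hr he h
  rcases he with rfl | rfl
  · simp
  · simp only [Int.cast_neg, Int.cast_one, neg_mul, one_mul, Complex.neg_im] at hpos ⊢
    rw [Complex.arg_neg_eq_arg_add_pi_of_im_neg (by linarith)]
    ring

/-- For three consecutive vectors, Cramer's rule says that the signed quotients are related by an
element of the modular group: `σ' = n - 1/σ`. -/
theorem step_recurrence {r e f n : ℤ} (hr : 1 ≤ r) (he : e = 1 ∨ e = -1) (hf : f = 1 ∨ f = -1)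
    {a b c : ℤ × ℤ} (hab : det2 a b = e * r) (hbc : det2 b c = f * r)
    (hac : det2 a c = e * f * n * r) :
    (f : ℂ) * (toC c / toC b) = -1 / ((e : ℂ) * (toC b / toC a)) + n := by
  have hr0 : (r : ℂ) ≠ 0 := by exact_mod_cast (by lia : r ≠ 0)
  have ha : toC a ≠ 0 := Complex.normSq_pos.1 (normSq_toC_pos (b := b) (by
    rw [hab]; rcases he with rfl | rfl <;> simp <;> lia))
  have hb : toC b ≠ 0 := Complex.normSq_pos.1 (normSq_toC_pos (b := c) (by
    rw [hbc]; rcases hf with rfl | rfl <;> simp <;> lia))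
  have plu : (det2 b c : ℂ) * toC a + det2 a b * toC c = det2 a c * toC b := by
    simp only [toC, det2]; push_cast; ring
  rw [hab, hbc, hac] at plu
  push_cast at plu
  have plu' : (f : ℂ) * toC a + e * toC c = e * f * n * toC b :=
    mul_left_cancel₀ hr0 (by linear_combination plu)
  rcases he with rfl | rfl <;> rcases hf with rfl | rfl <;>
    · field_simp
      push_cast at plu' ⊢
      first | linear_combination plu' | linear_combination -plu'

/-- The contribution `det(w, w')` of three consecutive vectors to the dual sum, in terms of the signs
`e`, `f` and the integer `n` of `step_recurrence`. -/
theorem step_dual {r e f n : ℤ} (hr : 1 ≤ r) (he : e = 1 ∨ e = -1) (hf : f = 1 ∨ f = -1)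
    {a b c : ℤ × ℤ} (hab : det2 a b = e * r) (hbc : det2 b c = f * r)
    (hac : det2 a c = e * f * n * r) :
    (r : ℚ) * det2Q ((det2 a b : ℚ)⁻¹ • (ratify b - ratify a))
      ((det2 b c : ℚ)⁻¹ • (ratify c - ratify b)) = e + f - n := by
  have hr0 : (r : ℚ) ≠ 0 := by exact_mod_cast (by lia : r ≠ 0)
  have expand : det2Q ((det2 a b : ℚ)⁻¹ • (ratify b - ratify a))
      ((det2 b c : ℚ)⁻¹ • (ratify c - ratify b)) =
      (det2 a b : ℚ)⁻¹ * (det2 b c : ℚ)⁻¹ * (det2 a b + det2 b c - det2 a c : ℤ) := by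
    simp only [det2Q, ratify, Prod.smul_fst, Prod.smul_snd, Prod.fst_sub, Prod.snd_sub, smul_eq_mul]
    generalize (det2 a b : ℚ)⁻¹ = x
    generalize (det2 b c : ℚ)⁻¹ = y
    simp only [det2]; push_cast; ring
  rw [expand, hab, hbc, hac]
  rcases he with rfl | rfl <;> rcases hf with rfl | rfl <;>
    · push_cast
      field_simp
      try ring

/-- Generalised twelve-point theorem: for an r-modular sequence
P = (v₁,…,v_k) (k ≥ 2), with w_i = (v_i − v_{i−1}) / det(v_{i−1}, v_i),
B(P) = Σ det(v_i, v_{i+1}) and B(P^∨) = Σ det(w_i, w_{i+1}), and with z_i ∈ ℂ the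
complex number corresponding to v_i, we have
(1/r)·B(P) + r·B(P^∨) = (6/π)·Σ arg(z_{i+1}/z_i) = 12·(winding number of P). -/
theorem twelve_point_theorem_of_r_modular_sequence (r : ℤ) (hr : 1 ≤ r)
    (k : ℕ) [NeZero k] (hk : 2 ≤ k)
    (v : ZMod k → ℤ × ℤ)
    (hprim : ∀ i, IsPrimitive (v i))
    (hdet : ∀ i, det2 (v i) (v (i + 1)) = r ∨ det2 (v i) (v (i + 1)) = -r)
    (w : ZMod k → ℚ × ℚ)
    (hw : ∀ i, w i = ((det2 (v (i - 1)) (v i) : ℤ) : ℚ)⁻¹ • (ratify (v i) - ratify (v (i - 1))))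
    (z : ZMod k → ℂ)
    (hz : ∀ i, z i = ((v i).1 : ℂ) + ((v i).2 : ℂ) * Complex.I) :
    (1 / (r : ℝ)) * ((∑ i : ZMod k, det2 (v i) (v (i + 1)) : ℤ) : ℝ)
        + (r : ℝ) * ((∑ i : ZMod k, det2Q (w i) (w (i + 1)) : ℚ) : ℝ)
      = 6 / Real.pi * ∑ i : ZMod k, (z (i + 1) / z i).arg := by
  obtain ⟨ψ, hT, hS⟩ := exists_arg_discriminant
  have hsign : ∀ i, ∃ e : ℤ, (e = 1 ∨ e = -1) ∧ det2 (v i) (v (i + 1)) = e * r := fun i => by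
    rcases hdet i with h | h
    · exact ⟨1, by simp, by simp [h]⟩
    · exact ⟨-1, by simp, by simp [h]⟩
  choose e he hd using hsign
  have hint : ∀ i, ∃ n : ℤ, det2 (v i) (v (i + 1 + 1)) = e i * e (i + 1) * n * r := fun i => by
    obtain ⟨a, ha⟩ := dvd_det2_of_modular (r := r) (hprim (i + 1))
      (Dvd.intro_left _ (hd i).symm) (Dvd.intro_left _ (hd (i + 1)).symm)
    refine ⟨e i * e (i + 1) * a, ?_⟩
    rw [ha]
    rcases he i with h | h <;> rcases he (i + 1) with h' | h' <;> rw [h, h'] <;> ring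
  choose n hn using hint
  have hz' : ∀ i, z i = toC (v i) := hz
  have shift : ∀ {M : Type} [AddCommMonoid M] (g : ZMod k → M), ∑ i, g (i + 1) = ∑ i, g i :=
    fun g => Equiv.sum_comp (Equiv.addRight (1 : ZMod k)) g
  have hdual : (r : ℚ) * ∑ i, det2Q (w i) (w (i + 1)) = 2 * ∑ i, (e i : ℚ) - ∑ i, (n i : ℚ) := by
    rw [← shift (fun i => det2Q (w i) (w (i + 1))), Finset.mul_sum, two_mul]
    nth_rewrite 2 [← shift (fun i => (e i : ℚ))]
    rw [← Finset.sum_add_distrib, ← Finset.sum_sub_distrib]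
    refine Finset.sum_congr rfl fun i _ => ?_
    rw [hw (i + 1), hw (i + 1 + 1), add_sub_cancel_right, add_sub_cancel_right]
    exact step_dual hr (he i) (he (i + 1)) (hd i) (hd (i + 1)) (hn i)
  have hdual' : (r : ℝ) * ((∑ i, det2Q (w i) (w (i + 1)) : ℚ) : ℝ) =
      2 * ∑ i, (e i : ℝ) - ∑ i, (n i : ℝ) := by exact_mod_cast congrArg (Rat.cast (K := ℝ)) hdual
  have hprimal : (1 / (r : ℝ)) * ((∑ i : ZMod k, det2 (v i) (v (i + 1)) : ℤ) : ℝ) =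
      ∑ i, (e i : ℝ) := by
    have : (r : ℝ) ≠ 0 := by exact_mod_cast (by lia : r ≠ 0)
    simp only [hd, ← Finset.sum_mul]
    push_cast
    field_simp
  -- How `ψ` changes from one signed quotient to the next; around the cycle the changes sum to `0`.
  have hpsi : ∀ i, ψ (e (i + 1) * (z (i + 1 + 1) / z (i + 1))) = ψ (e i * (z (i + 1) / z i))
      + 12 * ((z (i + 1) / z i).arg - e i * (Real.pi / 2)) + 2 * Real.pi * n i := fun i => by
    simp only [hz']
    rw [step_recurrence hr (he i) (he (i + 1)) (hd i) (hd (i + 1)) (hn i),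
      add_int_of_add_one hT, hS _ (step_im_pos hr (he i) (hd i)), step_arg hr (he i) (hd i)]
  have hsum := Finset.sum_congr (rfl : (Finset.univ : Finset (ZMod k)) = _) fun i _ => hpsi i
  rw [shift (fun i => ψ (e i * (z (i + 1) / z i)))] at hsum
  simp only [Finset.sum_add_distrib, ← Finset.mul_sum, Finset.sum_sub_distrib,
    ← Finset.sum_mul] at hsum
  rw [hprimal, hdual']
  have := Real.pi_ne_zero
  field_simp
  linarith
end

section
/- Let r be a positive integer, and let P be a Fano polygon with vertices v₁, …, v_k listed in counterclockwise cyclic order, such that det(v_i, v_{i+1}) = r for every i (indices modulo k). For each i let a_i be the unique integer with v_{i−1} + v_{i+1} + a_i·v_i = (0,0). Then Σ_{i=1}^{k} a_i = 12 − 3k. -/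
/-- `v : ZMod k → ℤ × ℤ` lists, in counterclockwise cyclic order, the vertices of a
Fano polygon: a convex lattice polygon (so k ≥ 3 and the points are in strictly
convex position, every other vertex lying strictly to the left of each directed
edge v_i → v_{i+1}) whose vertices are primitive and whose interior contains the
origin (the origin lies strictly to the left of each directed edge, which is
exactly 0 < det(v_i, v_{i+1})). -/
def IsFanoCCW {k : ℕ} (v : ZMod k → ℤ × ℤ) : Prop :=
  3 ≤ k ∧ (∀ i, IsPrimitive (v i)) ∧ (∀ i, 0 < det2 (v i) (v (i + 1))) ∧
    ∀ i j : ZMod k, j ≠ i → j ≠ i + 1 → 0 < det2 (v (i + 1) - v i) (v j - v i)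

/-- The table of the possible consecutive points `(x, y)`, `(x', y')` of the walk, together with the
value `t` of the partial sum of `3 + a i` over the vertices after the first, up to and including
`(x, y)`. -/
def WalkState (x y x' y' t : ℤ) : Prop :=
  (x, y, x', y', t) ∈ ([
    (1, 0, 0, 1, 0),
    (0, 1, -1, 1, 2), (0, 1, -1, 0, 3), (0, 1, -1, -1, 4),
    (-1, 1, -1, 0, 4), (-1, 1, 0, -1, 5),
    (-1, 0, -1, -1, 5), (-1, 0, 0, -1, 6), (-1, 0, 1, -1, 7),
    (-1, -1, 0, -1, 7), (-1, -1, 1, 0, 8),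
    (0, -1, 1, -1, 8), (0, -1, 1, 0, 9), (1, -1, 1, 0, 10)] : List (ℤ × ℤ × ℤ × ℤ × ℤ))

/-- One step of the walk. The next point lies in `{-1, 0, 1}²`, and either in the half-plane
`x + y ≤ 0` or at the end point `(1, 0)`. -/
lemma WalkState.step {x y x' y' t c : ℤ} (h : WalkState x y x' y' t)
    (hne : ¬ (x' = 1 ∧ y' = 0))
    (hx : |-c * x' - x| ≤ 1) (hy : |-c * y' - y| ≤ 1)
    (hs : (-c * x' - x) + (-c * y' - y) ≤ 0 ∨ (-c * x' - x = 1 ∧ -c * y' - y = 0)) :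
    WalkState x' y' (-c * x' - x) (-c * y' - y) (t + (3 + c)) := by
  have hc : c = -2 ∨ c = -1 ∨ c = 0 ∨ c = 1 ∨ c = 2 := by
    rw [abs_le] at hx hy
    simp only [WalkState, List.mem_cons, Prod.mk.injEq, List.not_mem_nil, or_false] at h
    rcases h with h | h | h | h | h | h | h | h | h | h | h | h | h | h <;>
      obtain ⟨rfl, rfl, rfl, rfl, rfl⟩ := h <;> omega
  simp only [WalkState, List.mem_cons, Prod.mk.injEq, List.not_mem_nil, or_false] at h
  rcases h with h | h | h | h | h | h | h | h | h | h | h | h | h | h <;>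
    obtain ⟨rfl, rfl, rfl, rfl, rfl⟩ := h <;>
    rcases hc with rfl | rfl | rfl | rfl | rfl <;>
    first
      | (exfalso; revert hne hx hy hs; decide)
      | (unfold WalkState; decide)

lemma walk_sum (k : ℕ) (hk : 3 ≤ k) (X Y c : ℕ → ℤ)
    (hX : ∀ n, X (n + 2) = -c n * X (n + 1) - X n)
    (hY : ∀ n, Y (n + 2) = -c n * Y (n + 1) - Y n)
    (bX : ∀ n, |X n| ≤ 1) (bY : ∀ n, |Y n| ≤ 1)
    (X0 : X 0 = 1) (Y0 : Y 0 = 0) (X1 : X 1 = 0) (Y1 : Y 1 = 1)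
    (Xk : X k = 1) (Yk : Y k = 0) (Xk1 : X (k + 1) = 0)
    (hs : ∀ n, 2 ≤ n → n < k → X n + Y n ≤ 0) :
    ∑ i ∈ Finset.range k, (3 + c i) = 12 := by
  have key : ∀ n, n + 1 ≤ k →
      WalkState (X n) (Y n) (X (n + 1)) (Y (n + 1)) (∑ i ∈ Finset.range n, (3 + c i)) := by
    intro n
    induction n with
    | zero =>
      intro _
      simp [X0, Y0, X1, Y1, WalkState]
    | succ n ih =>
      intro hn
      rw [Finset.sum_range_succ]
      have e1 := hX n
      have e2 := hY n
      have b1 := bX (n + 2)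
      have b2 := bY (n + 2)
      change WalkState (X (n + 1)) (Y (n + 1)) (X (n + 2)) (Y (n + 2)) _
      rw [e1] at b1 ⊢
      rw [e2] at b2 ⊢
      refine (ih (by omega)).step ?_ b1 b2 ?_
      · rintro ⟨h1, h2⟩
        rcases Nat.eq_zero_or_pos n with rfl | h0
        · rw [zero_add, X1] at h1; omega
        · have := hs (n + 1) (by omega) (by omega)
          omega
      · rw [← e1, ← e2]
        rcases Nat.lt_or_ge (n + 2) k with h | h
        · exact Or.inl (hs _ (by omega) h)
        · obtain rfl : k = n + 2 := by omega
          exact Or.inr ⟨Xk, Yk⟩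
  obtain ⟨m, rfl⟩ : ∃ m, k = m + 1 := ⟨k - 1, by omega⟩
  have h := key m le_rfl
  have e := hX m
  rw [Finset.sum_range_succ]
  change X (m + 2) = 0 at Xk1
  rw [Xk1, Xk] at e
  rw [Xk, Yk] at h
  simp only [WalkState, List.mem_cons, Prod.mk.injEq, List.not_mem_nil, or_false] at h
  omega

section Polygon

variable {k : ℕ} {v : ZMod k → ℤ × ℤ} {r : ℤ} {a : ZMod k → ℤ}

lemma det2_swap (u w : ℤ × ℤ) : det2 u w = -det2 w u := by
  unfold det2; ring

lemma det2_rec (ha : ∀ i, v (i - 1) + v (i + 1) + a i • v i = 0) (i : ZMod k) (w : ℤ × ℤ) :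
    det2 (v (i + 1 + 1)) w = -a (i + 1) * det2 (v (i + 1)) w - det2 (v i) w := by
  have h := ha (i + 1)
  rw [add_sub_cancel_right] at h
  have h1 := congrArg Prod.fst h
  have h2 := congrArg Prod.snd h
  simp only [Prod.fst_add, Prod.snd_add, Prod.smul_fst, Prod.smul_snd, smul_eq_mul,
    Prod.fst_zero, Prod.snd_zero] at h1 h2
  unfold det2
  linear_combination w.2 * h1 - w.1 * h2

lemma dvd_det2 [NeZero k] (hdet : ∀ i, det2 (v i) (v (i + 1)) = r)
    (ha : ∀ i, v (i - 1) + v (i + 1) + a i • v i = 0) (i j : ZMod k) :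
    r ∣ det2 (v i) (v j) := by
  have h : ∀ n : ℕ, r ∣ det2 (v (j + n)) (v j) ∧ r ∣ det2 (v (j + n + 1)) (v j) := by
    intro n
    induction n with
    | zero =>
      refine ⟨by simp [det2, mul_comm], ?_⟩
      rw [det2_swap]
      simp [hdet]
    | succ n ih =>
      rw [Nat.cast_succ, ← add_assoc]
      refine ⟨ih.2, ?_⟩
      rw [det2_rec ha]
      exact dvd_sub (Dvd.dvd.mul_left ih.2 _) ih.1
  simpa using (h (i - j).val).1

/-- Along the polygon, the determinant against a fixed vertex is weakly increasing: strict
convexity gives this up to an error less than `r`, and all determinants are multiples of `r`. -/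
lemma det2_mono [NeZero k] (hr : 0 < r) (hF : IsFanoCCW v) (hdet : ∀ i, det2 (v i) (v (i + 1)) = r)
    (ha : ∀ i, v (i - 1) + v (i + 1) + a i • v i = 0) {i j : ZMod k}
    (h1 : j ≠ i) (h2 : j ≠ i + 1) : det2 (v i) (v j) ≤ det2 (v (i + 1)) (v j) := by
  have h := hF.2.2.2 i j h1 h2
  have e : det2 (v (i + 1) - v i) (v j - v i)
      = det2 (v (i + 1)) (v j) - det2 (v i) (v j) + r := by
    rw [← hdet i]
    simp only [det2, Prod.fst_sub, Prod.snd_sub]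
    ring
  rw [e] at h
  obtain ⟨p, hp⟩ := dvd_det2 hdet ha i j
  obtain ⟨q, hq⟩ := dvd_det2 hdet ha (i + 1) j
  rw [hp, hq] at h ⊢
  have : 0 < q - p + 1 := by
    by_contra hn
    nlinarith
  exact mul_le_mul_of_nonneg_left (by omega) hr.le

lemma natCast_ne_zero_of_lt {n : ℕ} (h0 : 0 < n) (h : n < k) : (n : ZMod k) ≠ 0 := by
  rw [Ne, ZMod.natCast_eq_zero_iff]
  exact Nat.not_dvd_of_pos_of_lt h0 h

lemma neg_le_det2 [NeZero k] (hr : 0 < r) (hF : IsFanoCCW v) (hdet : ∀ i, det2 (v i) (v (i + 1)) = r)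
    (ha : ∀ i, v (i - 1) + v (i + 1) + a i • v i = 0) (i j : ZMod k) :
    -r ≤ det2 (v i) (v j) := by
  have h : ∀ n : ℕ, n + 2 ≤ k → -r ≤ det2 (v (j + 1 + n)) (v j) := by
    intro n
    induction n with
    | zero =>
      intro _
      rw [det2_swap]
      simp [hdet]
    | succ n ih =>
      intro hn
      rw [Nat.cast_succ, ← add_assoc]
      refine (ih (by omega)).trans (det2_mono hr hF hdet ha ?_ ?_)
      · intro e
        refine natCast_ne_zero_of_lt (k := k) (n := n + 1) (by omega) (by omega) ?_
        push_cast
        linear_combination -e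
      · intro e
        refine natCast_ne_zero_of_lt (k := k) (n := n + 2) (by omega) (by omega) ?_
        push_cast
        linear_combination -e
  by_cases hij : i = j
  · subst hij
    simp [det2, mul_comm, hr.le]
  · have hlt := ZMod.val_lt (i - j - 1)
    have hv : ((i - j - 1).val : ZMod k) = i - j - 1 := ZMod.natCast_zmod_val _
    have hne : (i - j - 1).val + 1 ≠ k := by
      intro e
      have := congrArg (Nat.cast : ℕ → ZMod k) e
      rw [Nat.cast_succ, hv, ZMod.natCast_self] at this
      exact hij (by linear_combination this)
    have := h (i - j - 1).val (by omega)
    rwa [hv, show j + 1 + (i - j - 1) = i by ring] at this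

lemma det2_le [NeZero k] (hr : 0 < r) (hF : IsFanoCCW v) (hdet : ∀ i, det2 (v i) (v (i + 1)) = r)
    (ha : ∀ i, v (i - 1) + v (i + 1) + a i • v i = 0) (i j : ZMod k) :
    det2 (v i) (v j) ≤ r := by
  rw [det2_swap]
  linarith [neg_le_det2 hr hF hdet ha j i]

/-- The determinants in units of `r` inherit the recursion along the polygon, and they lie in
`{-1, 0, 1}`. -/
lemma exists_quotient [NeZero k] (hr : 0 < r) (hF : IsFanoCCW v)
    (hdet : ∀ i, det2 (v i) (v (i + 1)) = r)
    (ha : ∀ i, v (i - 1) + v (i + 1) + a i • v i = 0) :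
    ∃ D : ZMod k → ZMod k → ℤ, (∀ i j, det2 (v i) (v j) = r * D i j) ∧
      (∀ i j, D (i + 1 + 1) j = -a (i + 1) * D (i + 1) j - D i j) ∧ ∀ i j, |D i j| ≤ 1 := by
  choose D hD using dvd_det2 hdet ha
  refine ⟨D, hD, fun i j => ?_, fun i j => ?_⟩
  · apply mul_left_cancel₀ hr.ne'
    rw [← hD, det2_rec ha, hD, hD]
    ring
  · have h1 := neg_le_det2 hr hF hdet ha i j
    have h2 := det2_le hr hF hdet ha i j
    rw [hD] at h1 h2
    rw [abs_le]
    constructor <;> nlinarith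

end Polygon

/-- if P is a Fano polygon whose vertices v₁,…,v_k (ccw) satisfy
det(v_i, v_{i+1}) = r for all i, and a_i is the unique integer with
v_{i−1} + v_{i+1} + a_i·v_i = 0, then Σ a_i = 12 − 3k. -/
theorem sum_a_eq_twelve_sub_three_k (r : ℤ) (hr : 0 < r)
    (k : ℕ) [NeZero k] (v : ZMod k → ℤ × ℤ)
    (hF : IsFanoCCW v)
    (hdet : ∀ i, det2 (v i) (v (i + 1)) = r)
    (a : ZMod k → ℤ)
    (ha : ∀ i, v (i - 1) + v (i + 1) + a i • v i = 0) :
    ∑ i : ZMod k, a i = 12 - 3 * (k : ℤ) := by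
  obtain ⟨D, hD, hrec, hb⟩ := exists_quotient hr hF hdet ha
  have D01 : D 0 1 = 1 := by
    apply mul_left_cancel₀ hr.ne'
    rw [← hD]
    simpa using hdet 0
  have D10 : D 1 0 = -1 := by
    apply mul_left_cancel₀ hr.ne'
    rw [← hD, det2_swap, hD, D01]
    ring
  have Dself : ∀ i, D i i = 0 := fun i => by
    apply mul_left_cancel₀ hr.ne'
    rw [← hD]
    simp [det2, mul_comm]
  -- Cramer's rule: the coordinates of `v n` in the basis `v 0, v 1` are `D n 1` and `-D n 0`.
  have hw := walk_sum k hF.1 (fun n => D n 1) (fun n => -D n 0) (fun n => a (n + 1))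
    (fun n => by
      have := hrec n 1
      push_cast
      rw [← this, add_assoc, one_add_one_eq_two])
    (fun n => by
      have := hrec n 0
      push_cast
      rw [← one_add_one_eq_two, ← add_assoc, this]
      ring)
    (fun n => hb _ _) (fun n => by rw [abs_neg]; exact hb _ _)
    (by simp [D01]) (by simp [Dself]) (by simp [Dself]) (by simp [D10])
    (by simp [D01]) (by simp [Dself]) (by simp [Dself])
    (fun n h2 hn => by
      have n0 : (n : ZMod k) ≠ 0 := natCast_ne_zero_of_lt (by omega) hn
      have n1 : (n : ZMod k) ≠ 0 + 1 := by
        intro e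
        refine natCast_ne_zero_of_lt (k := k) (n := n - 1) (by omega) (by omega) ?_
        rw [Nat.cast_sub (by omega), e]
        simp
      have h := det2_mono hr hF hdet ha n0 n1
      rw [zero_add, det2_swap, det2_swap (v 1), hD, hD] at h
      have : D n 1 ≤ D n 0 := by
        by_contra hlt
        nlinarith
      linarith)
  have hsum : ∑ i : ZMod k, a i = ∑ i ∈ Finset.range k, a ((i : ZMod k) + 1) := by
    rw [← Equiv.sum_comp (Equiv.addRight (1 : ZMod k)) a]
    symm
    refine Finset.sum_bij' (fun n _ => (n : ZMod k)) (fun i _ => i.val) ?_ ?_ ?_ ?_ ?_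
    · simp
    · intro i _
      simpa using ZMod.val_lt i
    · intro n hn
      exact ZMod.val_cast_of_lt (Finset.mem_range.mp hn)
    · intro i _
      exact ZMod.natCast_zmod_val i
    · simp
  rw [Finset.sum_add_distrib, ← hsum] at hw
  simp only [Finset.sum_const, Finset.card_range, nsmul_eq_mul] at hw
  linarith
end

section
/- Let r be a positive integer and let P be a Fano polygon with exactly 3 vertices v₁, v₂, v₃ listed in counterclockwise cyclic order, such that det(v_i, v_{i+1}) = r for every i (indices modulo 3). Then there exist M ∈ GL₂(ℤ) and an integer s with gcd(r,s) = gcd(r,s−1) = 1 such that M maps the vertex set {v₁, v₂, v₃} onto {(0,1), (−r,s−1), (r,−s)}. -/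
/-- The action of an integer 2×2 matrix on ℤ². -/
def mApply (M : Matrix (Fin 2) (Fin 2) ℤ) (u : ℤ × ℤ) : ℤ × ℤ :=
  (M 0 0 * u.1 + M 0 1 * u.2, M 1 0 * u.1 + M 1 1 * u.2)

theorem IsPrimitive.mApply {M : Matrix (Fin 2) (Fin 2) ℤ} (hM : M.det = 1) {u : ℤ × ℤ}
    (hu : IsPrimitive u) : IsPrimitive (mApply M u) := by
  unfold IsPrimitive at *
  rw [← Int.isCoprime_iff_gcd_eq_one] at *
  obtain ⟨p, q, hpq⟩ := hu
  rw [Matrix.det_fin_two] at hM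
  -- The Bézout coefficients transform by the adjugate of `M`, which is its inverse.
  refine ⟨p * M 1 1 - q * M 1 0, q * M 0 0 - p * M 0 1, ?_⟩
  simp only [_root_.mApply]
  linear_combination (p * u.1 + q * u.2) * hM + hpq

/-- a Fano polygon on 3 vertices all of whose edge cones have
determinant r has vertex set unimodular equivalent to
{(0,1), (−r,s−1), (r,−s)} with gcd(r,s) = gcd(r,s−1) = 1. -/
theorem classification_k_eq_three (r : ℤ) (hr : 0 < r)
    (v : ZMod 3 → ℤ × ℤ)
    (hF : IsFanoCCW v)
    (hdet : ∀ i, det2 (v i) (v (i + 1)) = r) :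
    ∃ (M : Matrix (Fin 2) (Fin 2) ℤ) (s : ℤ), IsUnit M.det ∧
      Int.gcd r s = 1 ∧ Int.gcd r (s - 1) = 1 ∧
      Set.range (fun i => mApply M (v i)) =
        ({(0, 1), (-r, s - 1), (r, -s)} : Set (ℤ × ℤ)) := by
  obtain ⟨-, hprim, -, -⟩ := hF
  have h01 : det2 (v 0) (v 1) = r := hdet 0
  have h12 : det2 (v 1) (v 2) = r := hdet 1
  have h20 : det2 (v 2) (v 0) = r := hdet 2
  obtain ⟨x, y, hxy⟩ := Int.isCoprime_iff_gcd_eq_one.mpr (hprim 0)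
  simp only [det2] at h01 h12 h20
  have hsum1 : (v 0).1 + (v 1).1 + (v 2).1 = 0 := by
    apply (mul_eq_zero.mp _).resolve_left hr.ne'
    linear_combination -(v 0).1 * h12 - (v 1).1 * h20 - (v 2).1 * h01
  have hsum2 : (v 0).2 + (v 1).2 + (v 2).2 = 0 := by
    apply (mul_eq_zero.mp _).resolve_left hr.ne'
    linear_combination -(v 0).2 * h12 - (v 1).2 * h20 - (v 2).2 * h01
  let M : Matrix (Fin 2) (Fin 2) ℤ := !![(v 0).2, -(v 0).1; x, y]
  have hM : M.det = 1 := by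
    simp only [M, Matrix.det_fin_two_of]
    linear_combination hxy
  obtain ⟨s, hs⟩ : ∃ s, s = x * (v 1).1 + y * (v 1).2 + 1 := ⟨_, rfl⟩
  have m0 : mApply M (v 0) = (0, 1) := by
    ext <;> simp [mApply, M]
    · ring
    · linear_combination hxy
  have m1 : mApply M (v 1) = (-r, s - 1) := by
    ext <;> simp [mApply, M]
    · linear_combination -h01
    · linear_combination -hs
  have m2 : mApply M (v 2) = (r, -s) := by
    ext <;> simp [mApply, M]
    · linear_combination h20
    · linear_combination x * hsum1 + y * hsum2 - hxy + hs
  have p1 := (hprim 1).mApply hM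
  have p2 := (hprim 2).mApply hM
  rw [m1] at p1
  rw [m2] at p2
  refine ⟨M, s, by simp [hM], by simpa [IsPrimitive] using p2,
    by simpa [IsPrimitive] using p1, ?_⟩
  ext w
  simp only [Set.mem_range, Set.mem_insert_iff, Set.mem_singleton_iff]
  constructor
  · rintro ⟨i, rfl⟩
    have hi : i = 0 ∨ i = 1 ∨ i = 2 := by
      revert i
      decide
    rcases hi with rfl | rfl | rfl
    · exact Or.inl m0
    · exact Or.inr (Or.inl m1)
    · exact Or.inr (Or.inr m2)
  · rintro (rfl | rfl | rfl)
    · exact ⟨0, m0⟩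
    · exact ⟨1, m1⟩
    · exact ⟨2, m2⟩
end

section
/- Let r be a positive integer and let P be a Fano polygon with exactly 6 vertices v₁, …, v₆ listed in counterclockwise cyclic order, such that det(v_i, v_{i+1}) = r for every i (indices modulo 6). Then there exist M ∈ GL₂(ℤ) and an integer s with gcd(r,s) = gcd(r,s+1) = 1 such that M maps the vertex set of P onto {(0,1), (−r,s+1), (−r,s), (0,−1), (r,−s−1), (r,−s)}. -/
/-- An integer vector parallel to a primitive vector is an integer multiple of it. -/
lemma exists_multiple_of_det2_eq_zero {u w : ℤ × ℤ} (hu : IsPrimitive u) (h : det2 w u = 0) :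
    ∃ a : ℤ, w.1 = a * u.1 ∧ w.2 = a * u.2 := by
  obtain ⟨x, y, hxy⟩ := Int.isCoprime_iff_gcd_eq_one.mpr hu
  unfold det2 at h
  refine ⟨x * w.1 + y * w.2, ?_, ?_⟩
  · linear_combination (-w.1) * hxy + y * h
  · linear_combination (-w.2) * hxy - x * h

lemma mul_le_one_of_convex {b c : ℤ} (hb : b ≤ 1) (hc : c ≤ 1) (h : 0 < c + 2 - b * c) :
    b * c ≤ 1 := by
  rcases lt_or_ge c 0 with h0 | h0
  · rcases lt_or_ge b 0 with h1 | h1 <;> nlinarith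
  · nlinarith

lemma eq_one_of_convex {b c : ℤ} (h : 0 < c + 2 - b * c) (h1 : b * c = 1) : b = 1 := by
  rcases Int.eq_one_or_neg_one_of_mul_eq_one h1 with h2 | h2
  · exact h2
  · subst h2; omega

/-- The image of a primitive vector `w` under the unimodular matrix with rows `(q, -p)`, `(x, y)` is
primitive; this image is `(-r, t)`. -/
lemma gcd_eq_one_of_isPrimitive {p q x y r t : ℤ} {w : ℤ × ℤ} (hw : IsPrimitive w)
    (hxy : x * p + y * q = 1) (hr : p * w.2 - q * w.1 = r) (ht : x * w.1 + y * w.2 = t) :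
    Int.gcd r t = 1 := by
  obtain ⟨m, n, hmn⟩ := Int.isCoprime_iff_gcd_eq_one.mpr hw
  refine Int.isCoprime_iff_gcd_eq_one.mp ⟨n * x - m * y, m * p + n * q, ?_⟩
  rw [← hr, ← ht]
  linear_combination (m * w.1 + n * w.2) * hxy + hmn

/-- Consecutive vertices satisfy the recurrence `v_{i+2} = v_{i+1} - v_i`. -/
lemma hexagon_recurrence (r : ℤ) (hr : 0 < r) (v : ZMod 6 → ℤ × ℤ) (hF : IsFanoCCW v)
    (hdet : ∀ i, det2 (v i) (v (i + 1)) = r) (i : ZMod 6) : v (i + 2) = v (i + 1) - v i := by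
  obtain ⟨-, hprim, -, hconv⟩ := hF
  have e2 : ∀ i : ZMod 6, i + 1 + 1 = i + 2 := by decide
  have e3 : ∀ i : ZMod 6, i + 2 + 1 = i + 3 := by decide
  have e12 : ∀ i : ZMod 6, i + 1 + 2 = i + 3 := by decide
  have e33 : ∀ i : ZMod 6, i + 3 + 3 = i := by decide
  have e31 : ∀ i : ZMod 6, i + 3 + 1 = i + 4 := by decide
  have hmul : ∀ i, ∃ a : ℤ, (v i + v (i + 2)).1 = a * (v (i + 1)).1 ∧
      (v i + v (i + 2)).2 = a * (v (i + 1)).2 := by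
    intro i
    refine exists_multiple_of_det2_eq_zero (hprim _) ?_
    have h1 := hdet i
    have h2 := hdet (i + 1)
    rw [e2] at h2
    simp only [det2, Prod.fst_add, Prod.snd_add] at *
    linear_combination h1 - h2
  choose a ha1 ha2 using hmul
  simp only [Prod.fst_add, Prod.snd_add] at ha1 ha2
  have hd2 : ∀ i, det2 (v i) (v (i + 2)) = r * a i := by
    intro i
    have h1 := hdet i
    simp only [det2] at *
    linear_combination (v i).1 * ha2 i - (v i).2 * ha1 i + a i * h1
  have hd3 : ∀ i, det2 (v i) (v (i + 3)) = r * (a i * a (i + 1) - 1) := by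
    intro i
    have h0 := hdet i
    have h1 := hd2 i
    have h2 := ha1 (i + 1)
    have h3 := ha2 (i + 1)
    rw [e2, e12] at h2 h3
    simp only [det2] at *
    linear_combination (v i).1 * h3 - (v i).2 * h2 + a (i + 1) * h1 - h0
  have hle : ∀ i, a i ≤ 1 := by
    intro i
    have h := hconv i (i + 2) (by revert i; decide) (by revert i; decide)
    have h0 := hdet i
    have h1 := hdet (i + 1)
    have h2 := hd2 i
    rw [e2] at h1
    simp only [det2, Prod.fst_sub, Prod.snd_sub] at *
    have : 0 < r * (2 - a i) := by linarith
    have := pos_of_mul_pos_right this hr.le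
    omega
  have hcv : ∀ i, 0 < a (i + 1) + 2 - a i * a (i + 1) := by
    intro i
    have h := hconv i (i + 3) (by revert i; decide) (by revert i; decide)
    have h0 := hdet i
    have h1 := hd2 (i + 1)
    have h2 := hd3 i
    rw [e12] at h1
    simp only [det2, Prod.fst_sub, Prod.snd_sub] at *
    have : 0 < r * (a (i + 1) + 2 - a i * a (i + 1)) := by linarith
    exact pos_of_mul_pos_right this hr.le
  have hsum : a i * a (i + 1) + a (i + 3) * a (i + 4) = 2 := by
    have h0 := hd3 i
    have h1 := hd3 (i + 3)
    rw [e33, e31] at h1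
    simp only [det2] at *
    have : r * (a i * a (i + 1) + a (i + 3) * a (i + 4) - 2) = 0 := by linarith
    rcases mul_eq_zero.mp this with h | h <;> omega
  have hp := mul_le_one_of_convex (hle i) (hle (i + 1)) (hcv i)
  have hq := mul_le_one_of_convex (hle (i + 3)) (hle (i + 3 + 1)) (hcv (i + 3))
  rw [e31] at hq
  have hai := eq_one_of_convex (hcv i) (by omega)
  have h1 := ha1 i
  have h2 := ha2 i
  rw [hai] at h1 h2
  ext
  · simp only [Prod.fst_sub]; omega
  · simp only [Prod.snd_sub]; omega

/-- a Fano polygon on 6 vertices all of whose edge cones have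
determinant r has vertex set unimodular equivalent to
{(0,1), (−r,s+1), (−r,s), (0,−1), (r,−s−1), (r,−s)} with gcd(r,s) = gcd(r,s+1) = 1. -/
theorem classification_k_eq_six (r : ℤ) (hr : 0 < r)
    (v : ZMod 6 → ℤ × ℤ)
    (hF : IsFanoCCW v)
    (hdet : ∀ i, det2 (v i) (v (i + 1)) = r) :
    ∃ (M : Matrix (Fin 2) (Fin 2) ℤ) (s : ℤ), IsUnit M.det ∧
      Int.gcd r s = 1 ∧ Int.gcd r (s + 1) = 1 ∧
      Set.range (fun i => mApply M (v i)) =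
        ({(0, 1), (-r, s + 1), (-r, s), (0, -1), (r, -s - 1), (r, -s)} : Set (ℤ × ℤ)) := by
  have hrec := hexagon_recurrence r hr v hF hdet
  obtain ⟨-, hprim, -, -⟩ := hF
  have h2 : v 2 = v 1 - v 0 := hrec 0
  have h3 : v 3 = -v 0 := by
    have h : v 3 = v 2 - v 1 := hrec 1
    rw [h, h2]; abel
  have h4 : v 4 = -v 1 := by
    have h : v 4 = v 3 - v 2 := hrec 2
    rw [h, h3, h2]; abel
  have h5 : v 5 = v 0 - v 1 := by
    have h : v 5 = v 4 - v 3 := hrec 3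
    rw [h, h4, h3]; abel
  have hd : det2 (v 0) (v 1) = r := hdet 0
  have p1 := hprim 1
  have p2 := hprim 2
  rw [h2] at p2
  obtain ⟨x, y, hxy⟩ := Int.isCoprime_iff_gcd_eq_one.mpr (hprim 0)
  unfold det2 at hd
  have f0 : mApply !![(v 0).2, -(v 0).1; x, y] (v 0) = (0, 1) := by
    ext
    · simp [mApply]; ring
    · simpa [mApply] using hxy
  have hfst : (v 0).2 * (v 1).1 - (v 0).1 * (v 1).2 = -r := by linarith
  have hneg : ∀ (M : Matrix (Fin 2) (Fin 2) ℤ) (u : ℤ × ℤ), mApply M (-u) = -mApply M u := by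
    intro M u; ext <;> simp [mApply] <;> ring
  have hsub : ∀ (M : Matrix (Fin 2) (Fin 2) ℤ) (u w : ℤ × ℤ),
      mApply M (u - w) = mApply M u - mApply M w := by
    intro M u w; ext <;> simp [mApply] <;> ring
  obtain ⟨s, hs⟩ : ∃ s, s = x * (v 1).1 + y * (v 1).2 - 1 := ⟨_, rfl⟩
  have f1 : mApply !![(v 0).2, -(v 0).1; x, y] (v 1) = (-r, s + 1) := by
    ext
    · simp [mApply]; linarith
    · simp [mApply]; linarith
  refine ⟨!![(v 0).2, -(v 0).1; x, y], s, ?_, ?_, ?_, ?_⟩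
  · rw [Matrix.det_fin_two_of, show (v 0).2 * y - -(v 0).1 * x = 1 by linarith]
    exact isUnit_one
  · refine gcd_eq_one_of_isPrimitive p2 hxy ?_ ?_
    · simp only [Prod.fst_sub, Prod.snd_sub]; linarith
    · simp only [Prod.fst_sub, Prod.snd_sub]; linarith
  · exact gcd_eq_one_of_isPrimitive p1 hxy (by linarith) (by linarith)
  · generalize !![(v 0).2, -(v 0).1; x, y] = M at f0 f1
    have f2 : mApply M (v 2) = (-r, s) := by rw [h2, hsub, f0, f1]; ext <;> simp
    have f3 : mApply M (v 3) = (0, -1) := by rw [h3, hneg, f0]; ext <;> simp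
    have f4 : mApply M (v 4) = (r, -s - 1) := by rw [h4, hneg, f1]; ext <;> simp; ring
    have f5 : mApply M (v 5) = (r, -s) := by rw [h5, hsub, f0, f1]; ext <;> simp
    rw [← f0, ← f1, ← f2, ← f3, ← f4, ← f5]
    have hcases : ∀ i : ZMod 6, i = 0 ∨ i = 1 ∨ i = 2 ∨ i = 3 ∨ i = 4 ∨ i = 5 := by decide
    ext z
    simp only [Set.mem_range, Set.mem_insert_iff, Set.mem_singleton_iff]
    constructor
    · rintro ⟨i, rfl⟩
      rcases hcases i with rfl | rfl | rfl | rfl | rfl | rfl <;> simp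
    · rintro (rfl | rfl | rfl | rfl | rfl | rfl) <;> exact ⟨_, rfl⟩
end

section
/- Let r > 2 and s be integers with 1 ≤ s < r and gcd(r,s) = 1. Suppose r divides s² + 1, and suppose in addition that either r divides 2s + 1 or r divides s² + s + 1. Then r = 5 and s = 2. (This is the arithmetic content of the statement that the three cyclic quotient R-singularities 1/r(1,s), 1/r(1,r−s) and 1/r(1,r−s−1) are all isomorphic only for (r,s) = (5,2).) -/
/-- if r > 2, 1 ≤ s < r, gcd(r,s) = 1, r ∣ s² + 1, and in addition
r ∣ 2s + 1 or r ∣ s² + s + 1, then (r,s) = (5,2). -/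
theorem five_two_of_three_isomorphic_R_cones (r s : ℤ) (hr : 2 < r)
    (hs : 1 ≤ s) (hsr : s < r) (hgcd : Int.gcd r s = 1)
    (h₁ : r ∣ s ^ 2 + 1)
    (h₂ : r ∣ 2 * s + 1 ∨ r ∣ s ^ 2 + s + 1) :
    r = 5 ∧ s = 2 := by
  rcases h₂ with h | h
  · -- 4(s² + 1) - (2s - 1)(2s + 1) = 5, so r divides 5.
    have h5 : r ∣ 5 := by
      have := dvd_sub (h₁.mul_left 4) (h.mul_left (2 * s - 1))
      ring_nf at this
      exact this
    have hle : r ≤ 5 := Int.le_of_dvd (by norm_num) h5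
    have hr5 : r = 5 := by interval_cases r <;> omega
    subst hr5
    omega
  · -- The difference of the two multiples of r is s, which is too small.
    have hd : r ∣ s := by
      have := dvd_sub h h₁
      ring_nf at this
      exact this
    have := Int.le_of_dvd (by omega) hd
    omega
end

section
/- Let r > s ≥ 1 be integers with gcd(r,s) = 1. If P and Q are both Fano polygons with singularity content (0, {3 × 1/r(1,s)}), then P and Q are unimodular equivalent: there exists M ∈ GL₂(ℤ) mapping the vertex set of P onto the vertex set of Q (equivalently, mapping P onto Q). -/
/-- A Fano polygon with vertices `v : ZMod k → ℤ × ℤ` has singularity content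
(0, {k × 1/r(1,s)}): the cone spanned by (0,1) and (r,−s) is an R-cone
(its lattice length gcd(r, s+1) satisfies gcd(r, s+1)² < r), and every edge cone,
i.e. every pair of adjacent vertices, is mapped by some M ∈ GL₂(ℤ) onto
{(0,1), (r,−s)}. -/
def HasSingContent (r s : ℤ) {k : ℕ} (v : ZMod k → ℤ × ℤ) : Prop :=
  ((Int.gcd r (s + 1) : ℤ)) ^ 2 < r ∧
    ∀ i : ZMod k, ∃ M : Matrix (Fin 2) (Fin 2) ℤ, IsUnit M.det ∧
      ({mApply M (v i), mApply M (v (i + 1))} : Set (ℤ × ℤ)) = {(0, 1), (r, -s)}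

lemma mApply_mul (M N : Matrix (Fin 2) (Fin 2) ℤ) (u : ℤ × ℤ) :
    mApply (M * N) u = mApply M (mApply N u) := by
  ext <;> simp [mApply, Matrix.mul_apply, Fin.sum_univ_two] <;> ring

lemma mApply_one (u : ℤ × ℤ) : mApply 1 u = u := by
  simp [mApply]

lemma det2_mApply (M : Matrix (Fin 2) (Fin 2) ℤ) (u v : ℤ × ℤ) :
    det2 (mApply M u) (mApply M v) = M.det * det2 u v := by
  simp only [det2, mApply, Matrix.det_fin_two]
  ring

/-- A counterclockwise edge whose cone is of type `1/r(1,s)` has determinant `r`. -/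
lemma det2_eq_of_edge {r s : ℤ} (hr : 0 < r) {u v : ℤ × ℤ} (hpos : 0 < det2 u v)
    {M : Matrix (Fin 2) (Fin 2) ℤ} (hM : IsUnit M.det)
    (h : ({mApply M u, mApply M v} : Set (ℤ × ℤ)) = {(0, 1), (r, -s)}) :
    det2 u v = r := by
  have hdet := det2_mApply M u v
  rcases Set.pair_eq_pair_iff.mp h with ⟨h1, h2⟩ | ⟨h1, h2⟩ <;>
    rcases Int.isUnit_iff.mp hM with h3 | h3 <;>
    · rw [h1, h2, h3] at hdet
      simp only [det2] at hdet hpos ⊢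
      linarith

/-- Three vectors with equal nonzero cyclic determinants sum to zero. -/
lemma eq_neg_add_of_det2 {r : ℤ} (hr : 0 < r) {a b c : ℤ × ℤ}
    (hab : det2 a b = r) (hbc : det2 b c = r) (hca : det2 c a = r) : c = -(a + b) := by
  simp only [det2] at hab hbc hca
  have h1 : r * (c.1 + a.1 + b.1) = 0 := by
    linear_combination (-c.1) * hab - a.1 * hbc - b.1 * hca
  have h2 : r * (c.2 + a.2 + b.2) = 0 := by
    linear_combination (-c.2) * hab - a.2 * hbc - b.2 * hca
  have h1' := (mul_eq_zero.mp h1).resolve_left hr.ne'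
  have h2' := (mul_eq_zero.mp h2).resolve_left hr.ne'
  ext
  · simp only [Prod.fst_neg, Prod.fst_add]; linarith
  · simp only [Prod.snd_neg, Prod.snd_add]; linarith

/-- Every triangle with singularity content `(0, {3 × 1/r(1,s)})` has the same normal form. -/
lemma exists_normal_form {r s : ℤ} (hr : 0 < r) {P : ZMod 3 → ℤ × ℤ}
    (hP : IsFanoCCW P ∧ HasSingContent r s P) :
    ∃ M : Matrix (Fin 2) (Fin 2) ℤ, IsUnit M.det ∧
      Set.range (fun i => mApply M (P i)) = {(0, 1), (r, -s), (-r, s - 1)} := by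
  obtain ⟨⟨-, -, hpos, -⟩, -, hcone⟩ := hP
  have hdet : ∀ i, det2 (P i) (P (i + 1)) = r := fun i => by
    obtain ⟨M, hM, h⟩ := hcone i
    exact det2_eq_of_edge hr (hpos i) hM h
  have hsum : P 2 = -(P 0 + P 1) := eq_neg_add_of_det2 hr (hdet 0) (hdet 1) (hdet 2)
  obtain ⟨M, hM, h⟩ := hcone 0
  refine ⟨M, hM, ?_⟩
  have hrange : Set.range (fun i => mApply M (P i)) =
      {mApply M (P 0), mApply M (P 1), mApply M (P 2)} := by
    ext x
    simp only [Set.mem_range, Set.mem_insert_iff, Set.mem_singleton_iff]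
    constructor
    · rintro ⟨i, rfl⟩
      fin_cases i
      · exact Or.inl rfl
      · exact Or.inr (Or.inl rfl)
      · exact Or.inr (Or.inr rfl)
    · rintro (rfl | rfl | rfl)
      exacts [⟨0, rfl⟩, ⟨1, rfl⟩, ⟨2, rfl⟩]
  have hthird : mApply M (P 2) = -(mApply M (P 0) + mApply M (P 1)) := by
    rw [hsum]
    ext <;> simp [mApply] <;> ring
  rw [zero_add] at h
  rw [hrange, hthird]
  rcases Set.pair_eq_pair_iff.mp h with ⟨h1, h2⟩ | ⟨h1, h2⟩
  · rw [h1, h2]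
    congr 3
    ext <;> simp
    ring
  · rw [h1, h2, Set.insert_comm]
    congr 3
    ext <;> simp
    ring

/-- for r > s ≥ 1 with gcd(r,s) = 1, any two Fano polygons with
singularity content (0, {3 × 1/r(1,s)}) are unimodular equivalent: some M ∈ GL₂(ℤ)
maps the vertex set of the first onto the vertex set of the second. -/
theorem fano_three_singularities_unique (r s : ℤ) (hs : 1 ≤ s) (hsr : s < r)
    (hgcd : Int.gcd r s = 1)
    (P Q : ZMod 3 → ℤ × ℤ)
    (hP : IsFanoCCW P ∧ HasSingContent r s P)
    (hQ : IsFanoCCW Q ∧ HasSingContent r s Q) :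
    ∃ M : Matrix (Fin 2) (Fin 2) ℤ, IsUnit M.det ∧
      Set.range (fun i => mApply M (P i)) = Set.range Q := by
  have hr : 0 < r := by linarith
  obtain ⟨A, hA, hAP⟩ := exists_normal_form hr hP
  obtain ⟨B, hB, hBQ⟩ := exists_normal_form hr hQ
  refine ⟨B⁻¹ * A, ?_, ?_⟩
  · rw [Matrix.det_mul]
    exact (Matrix.isUnit_nonsing_inv_det B hB).mul hA
  · have hinv : ∀ u, mApply B⁻¹ (mApply B u) = u := fun u => by
      rw [← mApply_mul, Matrix.nonsing_inv_mul B hB, mApply_one]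
    calc Set.range (fun i => mApply (B⁻¹ * A) (P i))
        = mApply B⁻¹ '' Set.range (fun i => mApply A (P i)) := by
          rw [← Set.range_comp]
          simp only [mApply_mul, Function.comp_def]
      _ = mApply B⁻¹ '' Set.range (fun i => mApply B (Q i)) := by rw [hAP, hBQ]
      _ = Set.range Q := by
          rw [← Set.range_comp]
          simp only [hinv, Function.comp_def]
end
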